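/- Let n ≥ 3 and δ ∈ (0, 1/2). Let Γ ⊆ ℝⁿ be a cone (i.e., t·λ ∈ Γ whenever t > 0 and λ ∈ Γ), and let F : closure(Γ) → ℝ be continuous and positively homogeneous of degree one, i.e., F(tλ) = t·F(λ) for all t > 0 and λ ∈ closure(Γ). Assume that every nonzero λ ∈ closure(Γ) satisfies λᵢ ≥ −((1−2δ)/(n−2))·(λ₁+⋯+λₙ) for every index i. Then there exists a constant c > 0 such that for every λ ∈ Γ and every index i, (n−2)·λᵢ + (λ₁+⋯+λₙ) ≥ c·F(λ). -/

import Mathlib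

/-!
Averaging the pinching condition over the indices shows that `σ₁` is positive on `closure Γ \ {0}`.
Hence, by compactness of the unit sphere of the closed cone and by homogeneity, a multiple `c' * F`
with `c' > 0` is bounded above by `σ₁`. On the other hand, `(n - 2) * λᵢ + σ₁ λ` exceeds the
nonnegative quantity `(n - 2) * λᵢ + (1 - 2 * δ) * σ₁ λ` by exactly `2 * δ * σ₁ λ`.
-/

theorem exists_lt_forall_le_of_lowerSemicontinuousOn {X α : Type*} [TopologicalSpace X]
    [LinearOrder α] [NoMaxOrder α] {f : X → α} {K : Set X} {a : α} (hK : IsCompact K)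
    (hf : LowerSemicontinuousOn f K) (ha : ∀ x ∈ K, a < f x) :
    ∃ b, a < b ∧ ∀ x ∈ K, b ≤ f x := by
  rcases K.eq_empty_or_nonempty with rfl | hne
  · obtain ⟨b, hb⟩ := exists_gt a
    exact ⟨b, hb, fun _ hx ↦ hx.elim⟩
  · obtain ⟨x, hx, hmin⟩ := hf.exists_isMinOn hne hK
    exact ⟨f x, ha x hx, hmin⟩

theorem exists_pos_forall_mul_le_of_isCompact {X : Type*} [TopologicalSpace X] {f g : X → ℝ}
    {K : Set X} (hK : IsCompact K) (hf : UpperSemicontinuousOn f K)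
    (hg : LowerSemicontinuousOn g K) (hpos : ∀ x ∈ K, 0 < g x) :
    ∃ c : ℝ, 0 < c ∧ ∀ x ∈ K, c * f x ≤ g x := by
  obtain ⟨m, hm, hmg⟩ := exists_lt_forall_le_of_lowerSemicontinuousOn hK hg hpos
  obtain ⟨B, hB1, hfB⟩ := (hf.bddAbove_of_isCompact hK).exists_ge 1
  have hB : 0 < B := one_pos.trans_le hB1
  have hc : 0 < m / B := div_pos hm hB
  refine ⟨m / B, hc, fun x hx ↦ ?_⟩
  calc m / B * f x ≤ m / B * B :=
        mul_le_mul_of_nonneg_left (hfB _ (Set.mem_image_of_mem f hx)) hc.le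
    _ = m := div_mul_cancel₀ m hB.ne'
    _ ≤ g x := hmg x hx

section Cone

variable {E : Type*}

/-- A cone, not necessarily convex: a set stable under multiplication by positive reals. The origin
may or may not belong to it. -/
def IsCone [SMul ℝ E] (S : Set E) : Prop :=
  ∀ t : ℝ, 0 < t → ∀ x ∈ S, t • x ∈ S

/-- Positive homogeneity of degree one of a real function on a cone. -/
def PosHomogeneousOn [SMul ℝ E] (F : E → ℝ) (S : Set E) : Prop :=
  ∀ t : ℝ, 0 < t → ∀ x ∈ S, F (t • x) = t * F x

theorem IsCone.closure [TopologicalSpace E] [SMul ℝ E] [ContinuousConstSMul ℝ E] {S : Set E}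
    (hS : IsCone S) : IsCone (closure S) :=
  fun t ht _ hx ↦ map_mem_closure (continuous_const_smul t) hx (hS t ht)

namespace PosHomogeneousOn

theorem const_mul [SMul ℝ E] {F : E → ℝ} {S : Set E} (hF : PosHomogeneousOn F S) (c : ℝ) :
    PosHomogeneousOn (fun x ↦ c * F x) S :=
  fun t ht x hx ↦ by simp only [hF t ht x hx, mul_left_comm]

theorem map_zero [Zero E] [SMulZeroClass ℝ E] {F : E → ℝ} {S : Set E}
    (hF : PosHomogeneousOn F S) (h0 : (0 : E) ∈ S) : F 0 = 0 := by
  have hdouble := hF 2 two_pos 0 h0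
  rw [smul_zero] at hdouble
  linarith

variable [NormedAddCommGroup E] [NormedSpace ℝ E] {S : Set E} {F G : E → ℝ}

theorem le_of_le_on_sphere (hS : IsCone S) (hF : PosHomogeneousOn F S)
    (hG : PosHomogeneousOn G S) (hle : ∀ x ∈ S ∩ Metric.sphere 0 1, F x ≤ G x) {x : E}
    (hx : x ∈ S) : F x ≤ G x := by
  rcases eq_or_ne x 0 with rfl | hx0
  · rw [hF.map_zero hx, hG.map_zero hx]
  have hinv : 0 < ‖x‖⁻¹ := inv_pos.2 (norm_pos_iff.2 hx0)
  have hunit : ‖x‖⁻¹ • x ∈ Metric.sphere (0 : E) 1 := by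
    rw [mem_sphere_zero_iff_norm, norm_smul, norm_inv, norm_norm,
      inv_mul_cancel₀ (norm_ne_zero_iff.2 hx0)]
  have hle_unit := hle _ ⟨hS _ hinv x hx, hunit⟩
  rw [hF _ hinv x hx, hG _ hinv x hx] at hle_unit
  exact le_of_mul_le_mul_left hle_unit hinv

theorem exists_pos_forall_mul_le [ProperSpace E] (hclosed : IsClosed S) (hS : IsCone S)
    (hF : PosHomogeneousOn F S) (hG : PosHomogeneousOn G S) (hFusc : UpperSemicontinuousOn F S)
    (hGlsc : LowerSemicontinuousOn G S) (hGpos : ∀ x ∈ S, x ≠ 0 → 0 < G x) :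
    ∃ c : ℝ, 0 < c ∧ ∀ x ∈ S, c * F x ≤ G x := by
  have hcompact : IsCompact (S ∩ Metric.sphere 0 1) := (isCompact_sphere 0 1).inter_left hclosed
  obtain ⟨c, hc, hle⟩ := exists_pos_forall_mul_le_of_isCompact hcompact
    (hFusc.mono Set.inter_subset_left) (hGlsc.mono Set.inter_subset_left)
    fun x hx ↦ hGpos x hx.1 (ne_zero_of_mem_unit_sphere ⟨x, hx.2⟩)
  exact ⟨c, hc, fun x hx ↦ le_of_le_on_sphere hS (hF.const_mul c) hG hle hx⟩

end PosHomogeneousOn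

end Cone

section Pinching

variable {ι : Type*} [Fintype ι]

theorem posHomogeneousOn_sum_coord (S : Set (EuclideanSpace ℝ ι)) :
    PosHomogeneousOn (fun x ↦ ∑ i, x i) S :=
  fun t _ x _ ↦ (Finset.mul_sum Finset.univ x t).symm

theorem sum_pos_of_forall_mul_add_mul_sum_nonneg {𝕜 : Type*} [Field 𝕜] [LinearOrder 𝕜]
    [IsStrictOrderedRing 𝕜] {k θ : 𝕜} (hk : k ≠ 0) (hkθ : 0 < k + Fintype.card ι * θ)
    {x : ι → 𝕜} (hx : ∀ i, 0 ≤ k * x i + θ * ∑ j, x j) (hx0 : x ≠ 0) : 0 < ∑ i, x i := by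
  have hsum : ∑ i, (k * x i + θ * ∑ j, x j) = (k + Fintype.card ι * θ) * ∑ j, x j := by
    rw [Finset.sum_add_distrib, ← Finset.mul_sum, Finset.sum_const, Finset.card_univ,
      nsmul_eq_mul]
    ring
  have hnonneg : 0 ≤ ∑ j, x j :=
    nonneg_of_mul_nonneg_right (hsum ▸ Finset.sum_nonneg fun i _ ↦ hx i) hkθ
  refine hnonneg.lt_of_ne' fun hzero ↦ hx0 (funext fun i ↦ ?_)
  have hterm := (Finset.sum_eq_zero_iff_of_nonneg fun i _ ↦ hx i).1
    (by rw [hsum, hzero, mul_zero]) i (Finset.mem_univ i)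
  simpa [hzero, hk] using hterm

theorem exists_pos_forall_mul_le_mul_coord_add_mul_sum {k θ η : ℝ} (hk : k ≠ 0)
    (hkθ : 0 < k + Fintype.card ι * θ) (hθη : θ < η) {S : Set (EuclideanSpace ℝ ι)}
    (hclosed : IsClosed S) (hS : IsCone S) {F : EuclideanSpace ℝ ι → ℝ}
    (hF : PosHomogeneousOn F S) (hFusc : UpperSemicontinuousOn F S)
    (hpinch : ∀ x ∈ S, ∀ i, 0 ≤ k * x i + θ * ∑ j, x j) :
    ∃ c : ℝ, 0 < c ∧ ∀ x ∈ S, ∀ i, c * F x ≤ k * x i + η * ∑ j, x j := by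
  have hsum_pos : ∀ x ∈ S, x ≠ 0 → 0 < ∑ j, x j := fun x hx hx0 ↦
    sum_pos_of_forall_mul_add_mul_sum_nonneg hk hkθ (hpinch x hx)
      ((WithLp.ofLp_eq_zero 2).not.2 hx0)
  have hsum_cont : Continuous fun x : EuclideanSpace ℝ ι ↦ ∑ j, x j := by fun_prop
  obtain ⟨c, hc, hle⟩ := hF.exists_pos_forall_mul_le hclosed hS (posHomogeneousOn_sum_coord S)
    hFusc hsum_cont.continuousOn.lowerSemicontinuousOn hsum_pos
  have hgap : 0 < η - θ := sub_pos.2 hθη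
  refine ⟨(η - θ) * c, mul_pos hgap hc, fun x hx i ↦ ?_⟩
  calc (η - θ) * c * F x = (η - θ) * (c * F x) := mul_assoc _ _ _
    _ ≤ (η - θ) * ∑ j, x j := mul_le_mul_of_nonneg_left (hle x hx) hgap.le
    _ ≤ (k * x i + θ * ∑ j, x j) + (η - θ) * ∑ j, x j := le_add_of_nonneg_left (hpinch x hx i)
    _ = k * x i + η * ∑ j, x j := by ring

end Pinching

/- The range of `δ` is sharp: for `δ = 1 - 1 / n` the pinching condition holds on the whole line
through `(1, …, 1)`, and the conclusion fails for `F = |σ₁|`. -/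
theorem stmt_2_general {n : ℕ} (hn : 3 ≤ n) {δ : ℝ} (hδ0 : 0 < δ) (hδ : n * δ < n - 1)
    {Γ : Set (EuclideanSpace ℝ (Fin n))} (hcone : IsCone Γ) {F : EuclideanSpace ℝ (Fin n) → ℝ}
    (hFusc : UpperSemicontinuousOn F (closure Γ)) (hFhom : PosHomogeneousOn F (closure Γ))
    (hcond : ∀ lam ∈ closure Γ, lam ≠ 0 →
        ∀ i, -((1 - 2 * δ) / ((n : ℝ) - 2)) * (∑ j, lam j) ≤ lam i) :
    ∃ c : ℝ, 0 < c ∧ ∀ lam ∈ closure Γ, ∀ i,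
      c * F lam ≤ ((n : ℝ) - 2) * lam i + ∑ j, lam j := by
  have hk : (0 : ℝ) < n - 2 := sub_pos.2 (by exact_mod_cast hn)
  have hkθ : 0 < ((n : ℝ) - 2) + Fintype.card (Fin n) * (1 - 2 * δ) := by
    rw [Fintype.card_fin]
    linarith
  have hpinch : ∀ lam ∈ closure Γ, ∀ i,
      0 ≤ ((n : ℝ) - 2) * lam i + (1 - 2 * δ) * ∑ j, lam j := by
    intro lam hlam i
    rcases eq_or_ne lam 0 with rfl | hlam0
    · simp
    have hscaled := hcond lam hlam hlam0 i
    rw [← neg_div, div_mul_eq_mul_div, div_le_iff₀' hk] at hscaled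
    linarith
  simpa only [one_mul] using exists_pos_forall_mul_le_mul_coord_add_mul_sum hk.ne' hkθ
    (by linarith : 1 - 2 * δ < 1) isClosed_closure hcone.closure hFhom hFusc hpinch

theorem stmt_2 (n : ℕ) (hn : 3 ≤ n) (δ : ℝ) (hδ0 : 0 < δ) (hδ : δ < 1/2)
    (Γ : Set (EuclideanSpace ℝ (Fin n)))
    (hcone : ∀ t : ℝ, 0 < t → ∀ lam ∈ Γ, t • lam ∈ Γ)
    (F : EuclideanSpace ℝ (Fin n) → ℝ)
    (hFcont : ContinuousOn F (closure Γ))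
    (hFhom : ∀ t : ℝ, 0 < t → ∀ lam ∈ closure Γ, F (t • lam) = t * F lam)
    (hcond : ∀ lam ∈ closure Γ, lam ≠ 0 →
        ∀ i, -((1 - 2*δ)/((n : ℝ) - 2)) * (∑ j, lam j) ≤ lam i) :
    ∃ c : ℝ, 0 < c ∧ ∀ lam ∈ Γ, ∀ i,
      c * F lam ≤ ((n : ℝ) - 2) * lam i + ∑ j, lam j := by
  have hn3 : (3 : ℝ) ≤ n := by exact_mod_cast hn
  obtain ⟨c, hc, hle⟩ := stmt_2_general hn hδ0 (by nlinarith) hcone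
    hFcont.upperSemicontinuousOn hFhom hcond
  exact ⟨c, hc, fun lam hlam ↦ hle lam (subset_closure hlam)⟩
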